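/- Let K be a field and f₁,...,f_r odd-degree homogeneous forms over ℝ in n variables with n > r. Then the system f₁ = ... = f_r = 0 has a nonzero real solution. -/

import Mathlib

open MvPolynomial

/-!
Setting superfluous variables to zero, let the variables be the `X (some i)`, one for each form,
and a further one `X none`. Join the forms `X (some i) ^ d i` to the given forms by the homotopy
`H i = T * X (some i) ^ d i + (1 - T) * f i` over `K[T]`, and put `L = Frac K[T]`. In the chart
`X none = 1` the `H i`-adic monomials form a basis of the polynomial ring over `L`, because they
specialize to the usual monomials at `T = 1`. Hence the coordinate ring of the zero scheme over `L`
has dimension `∏ d i`, as in Bézout's theorem. This is prime to `p`, so there is a zero in a field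
`E` with `[E : L]` prime to `p`. The integral closure of `K[T]` in `E` is then free of rank prime to
`p`, so its fibre over `T = 0` has a `K`-rational point when `K` is a `p`-field. Scaling the zero so
that its coordinates are integral at this point and one of them is `1`, we may reduce it to a
nontrivial zero over `K` of the forms `H i` at `T = 0`, that is, of the given forms.
-/

universe u v

/-- Pfister's `p`-fields, encoded by irreducible polynomials: every irreducible polynomial of
degree prime to `p` is linear. In characteristic zero this says that all finite extensions have
degree a power of `p`, when `p` is prime. -/
def IsPField (p : ℕ) (K : Type*) [Field K] : Prop :=
  ∀ f : Polynomial K, Irreducible f → ¬ p ∣ f.natDegree → f.natDegree = 1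

theorem isPField_two_real : IsPField 2 ℝ := fun f hf hodd ↦ by
  have hle := hf.natDegree_le_two
  omega

section RationalPoints

variable {p : ℕ}

theorem exists_isMaximal_not_dvd_finrank (L : Type*) {A : Type*} [Field L] [CommRing A]
    [Algebra L A] [Module.Finite L A] (hA : ¬ p ∣ Module.finrank L A) :
    ∃ I : Ideal A, I.IsMaximal ∧ ¬ p ∣ Module.finrank L (A ⧸ I) := by
  -- Otherwise `p` divides the dimension of every factor of a filtration of `A` by prime quotients.
  contrapose! hA
  have : IsArtinianRing A := .of_finite L A
  refine IsNoetherianRing.induction_on_isQuotientEquivQuotientPrime A (M := A) inferInstance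
    (motive := fun N _ _ _ ↦ ∀ [Module L N] [IsScalarTower L A N], p ∣ Module.finrank L N) ?_ ?_ ?_
  · intro N _ _ _ _ _ _
    simp [Module.finrank_zero_of_subsingleton]
  · intro N _ _ _ q e _ _
    rw [(e.restrictScalars L).finrank_eq]
    exact hA q.1 inferInstance
  · intro N₁ _ _ _ N₂ _ _ _ N₃ _ _ _ f g hf hg hfg h₁ h₃ _ _
    let := Module.compHom N₁ (algebraMap L A)
    let := Module.compHom N₃ (algebraMap L A)
    have : IsScalarTower L A N₁ := .of_algebraMap_smul fun _ _ ↦ rfl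
    have : IsScalarTower L A N₃ := .of_algebraMap_smul fun _ _ ↦ rfl
    have : Module.Finite L N₂ := .trans A N₂
    let f' := f.restrictScalars L
    let g' := g.restrictScalars L
    have hf' : Function.Injective f' := hf
    have hg' : LinearMap.range g' = ⊤ := LinearMap.range_eq_top.mpr hg
    have hfg' : LinearMap.ker g' = LinearMap.range f' := LinearMap.exact_iff.mp hfg
    rw [← g'.finrank_range_add_finrank_ker, hg', finrank_top, hfg',
      LinearMap.finrank_range_of_inj hf']
    exact dvd_add h₃ h₁

theorem nonempty_algHom_of_not_dvd_finrank {K A : Type*} [Field K] [CommRing A] [Algebra K A]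
    [Module.Finite K A] (hK : IsPField p K) (hA : ¬ p ∣ Module.finrank K A) :
    Nonempty (A →ₐ[K] K) := by
  obtain ⟨I, hI, hpI⟩ := exists_isMaximal_not_dvd_finrank K hA
  let := Ideal.Quotient.field I
  have hsurj : Function.Surjective (algebraMap K (A ⧸ I)) := fun α ↦
    have hα : IsIntegral K α := .of_finite K α
    minpoly.natDegree_eq_one_iff.mp <| hK _ (minpoly.irreducible hα)
      fun hp ↦ hpI (hp.trans (minpoly.degree_dvd hα))
  let e := AlgEquiv.ofBijective (Algebra.ofId K (A ⧸ I))
    ⟨(algebraMap K (A ⧸ I)).injective, hsurj⟩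
  exact ⟨e.symm.toAlgHom.comp (Ideal.Quotient.mkₐ K I)⟩

theorem nonempty_algHom_integralClosure {R K L E : Type*} [CommRing R] [IsDomain R]
    [IsPrincipalIdealRing R] [Field L] [Algebra R L] [IsFractionRing R L] [Field E] [Algebra L E]
    [Algebra R E] [IsScalarTower R L E] [FiniteDimensional L E] [Algebra.IsSeparable L E]
    [Field K] [Algebra R K] (hK : IsPField p K) (hE : ¬ p ∣ Module.finrank L E) :
    Nonempty (integralClosure R E →ₐ[R] K) := by
  -- The closure is free of rank `[E : L]` over `R`; base change to `K` preserves the rank.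
  have : Module.IsTorsionFree R E := .trans_faithfulSMul R L E
  have := IsIntegralClosure.finite R L E (integralClosure R E)
  have := IsIntegralClosure.module_free R L E (integralClosure R E)
  rw [← IsIntegralClosure.rank R L E (integralClosure R E),
    ← Module.finrank_baseChange (R := K)] at hE
  obtain ⟨φ⟩ := nonempty_algHom_of_not_dvd_finrank hK hE
  exact ⟨(φ.restrictScalars R).comp Algebra.TensorProduct.includeRight⟩

end RationalPoints

section Reduction

variable {σ κ : Type*}

theorem aeval_smul_of_isHomogeneous {R S : Type*} [CommSemiring R] [CommSemiring S]
    [Algebra R S] {n : ℕ} {f : MvPolynomial σ R} (hf : f.IsHomogeneous n) (c : S) (x : σ → S) :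
    aeval (c • x) f = c ^ n * aeval x f := by
  simp only [aeval_def, eval₂_eq, Finset.mul_sum]
  refine Finset.sum_congr rfl fun m hm ↦ ?_
  have hdeg : ∑ i ∈ m.support, m i = n := (hf.degree_eq_sum_deg_support hm).symm
  simp only [Pi.smul_apply, smul_eq_mul, mul_pow, Finset.prod_mul_distrib,
    Finset.prod_pow_eq_pow_sum, hdeg, mul_left_comm]

theorem exists_eq_one_aeval_eq_zero_of_valuationRing {V E : Type*} [CommRing V] [IsDomain V]
    [ValuationRing V] [Field E] [Algebra V E] [IsFractionRing V E] [Finite σ] {d : κ → ℕ}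
    {f : κ → MvPolynomial σ V} (hf : ∀ i, (f i).IsHomogeneous (d i)) {z : σ → E} (hz : z ≠ 0)
    (hfz : ∀ i, aeval z (f i) = 0) :
    ∃ w : σ → V, (∃ j, w j = 1) ∧ ∀ i, aeval w (f i) = 0 := by
  obtain ⟨k, hk⟩ := Function.ne_iff.mp hz
  have : Nonempty σ := ⟨k⟩
  obtain ⟨j, hj⟩ := Finite.exists_max fun j ↦ ValuationRing.valuation V E (z j)
  have hzj : z j ≠ 0 := fun h ↦ hk (by simpa [h] using hj k)
  have hint (i : σ) : ∃ a, algebraMap V E a = (z j)⁻¹ * z i := by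
    rw [← ValuationRing.mem_integer_iff, Valuation.mem_integer_iff, map_mul, map_inv₀]
    exact inv_mul_le_one_of_le₀ (hj i) zero_le
  choose w hw using hint
  have hinj := IsFractionRing.injective V E
  refine ⟨w, ⟨j, hinj (by simp [hw, hzj])⟩, fun i ↦ hinj ?_⟩
  have hwz : algebraMap V E ∘ w = (z j)⁻¹ • z := funext hw
  rw [← aeval_algebraMap_apply]
  change aeval (algebraMap V E ∘ w) (f i) = _
  rw [hwz, aeval_smul_of_isHomogeneous (hf i), hfz, mul_zero, map_zero]

theorem exists_ne_zero_eval₂_eq_zero_of_isDedekindDomain {S E k : Type*} [CommRing S]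
    [IsDedekindDomain S] [Field E] [Algebra S E] [IsFractionRing S E] [Field k] (φ : S →+* k)
    [Finite σ] {d : κ → ℕ} {f : κ → MvPolynomial σ S} (hf : ∀ i, (f i).IsHomogeneous (d i))
    {z : σ → E} (hz : z ≠ 0) (hfz : ∀ i, aeval z (f i) = 0) :
    ∃ x : σ → k, x ≠ 0 ∧ ∀ i, eval₂ φ x (f i) = 0 := by
  let P := RingHom.ker φ
  have : P.IsPrime := RingHom.ker_isPrime φ
  let V := Localization.AtPrime P
  let : Algebra V E := IsLocalization.localizationAlgebraOfSubmonoidLe V E P.primeCompl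
    (nonZeroDivisors S) P.primeCompl_le_nonZeroDivisors
  have : IsScalarTower S V E := IsLocalization.localization_isScalarTower_of_submonoid_le V E
    P.primeCompl (nonZeroDivisors S) P.primeCompl_le_nonZeroDivisors
  have : IsFractionRing V E :=
    IsFractionRing.isFractionRing_of_isDomain_of_isLocalization P.primeCompl V E
  obtain ⟨w, ⟨j, hj⟩, hw⟩ := exists_eq_one_aeval_eq_zero_of_valuationRing (V := V)
    (fun i ↦ (hf i).map (algebraMap S V)) hz (fun i ↦ by rw [aeval_map_algebraMap, hfz])
  let ψ : V →+* k := IsLocalization.lift (M := P.primeCompl) (g := φ) fun s ↦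
    isUnit_iff_ne_zero.mpr s.2
  refine ⟨ψ ∘ w, fun h ↦ one_ne_zero (α := k) ?_, fun i ↦ ?_⟩
  · rw [← map_one ψ, ← hj]
    exact congrFun h j
  · have hψ : ψ.comp (algebraMap S V) = φ := IsLocalization.lift_comp _
    rw [← hψ, ← eval₂_comp_left, ← aeval_def, ← aeval_map_algebraMap V, hw, map_zero]

end Reduction

section Families

variable {σ R L k : Type*}

theorem linearIndependent_map_of_map_eq_monomial [CommRing R] [CommRing L] [IsDomain L] [CommRing k]
    [Nontrivial k] (φ : R →+* k) {ψ : R →+* L} (hψ : Function.Injective ψ)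
    {v : (σ →₀ ℕ) → MvPolynomial σ R} (hv : ∀ c, map φ (v c) = monomial c 1) :
    LinearIndependent L fun c ↦ map ψ (v c) := by
  classical
  rw [linearIndependent_iff_finset_linearIndependent]
  intro s
  let M : Matrix s s R := .of fun c e ↦ coeff e.1 (v c.1)
  have hφM : φ.mapMatrix M = 1 := by
    ext c e
    change φ (coeff e.1 (v c.1)) = _
    rw [← coeff_map, hv, coeff_monomial, Matrix.one_apply]
    simp only [Subtype.ext_iff]
  -- The finite minors of the coefficient matrix specialize to `1` under `φ`, so none vanishes.
  have hdet : (ψ.mapMatrix M).det ≠ 0 := by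
    rw [← RingHom.map_det, map_ne_zero_iff ψ hψ]
    intro h
    have := φ.map_det M
    simp [h, hφM] at this
  have hrow := Matrix.linearIndependent_rows_of_det_ne_zero hdet
  let coeffs : MvPolynomial σ L →ₗ[L] s → L := LinearMap.pi fun e ↦ lcoeff L e.1
  refine LinearIndependent.of_comp coeffs ?_
  convert hrow using 1
  ext c e
  simp [M, coeffs, coeff_map]

theorem span_range_eq_top_of_totalDegree_le [Field L] [Finite σ] {v : (σ →₀ ℕ) → MvPolynomial σ L}
    (hv : LinearIndependent L v) (hdeg : ∀ c, (v c).totalDegree ≤ c.degree) :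
    Submodule.span L (Set.range v) = ⊤ := by
  have hspan (D : ℕ) :
      Submodule.span L (Set.range (v ∘ ((↑) : {c : σ →₀ ℕ | c.degree ≤ D} → σ →₀ ℕ))) =
        restrictTotalDegree σ L D := by
    have : Fintype {c : σ →₀ ℕ | c.degree ≤ D} := (Finsupp.finite_of_degree_le D).fintype
    refine Submodule.eq_of_le_of_finrank_eq ?_ ?_
    · rw [Submodule.span_le]
      rintro _ ⟨c, rfl⟩
      exact (mem_restrictTotalDegree ..).mpr ((hdeg c).trans c.2)
    · rw [finrank_span_eq_card (hv.comp _ Subtype.val_injective)]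
      exact (Module.finrank_eq_card_basis (basisRestrictSupport L {c : σ →₀ ℕ | c.degree ≤ D})).symm
  rw [eq_top_iff]
  intro f _
  have hf : f ∈ restrictTotalDegree σ L f.totalDegree := (mem_restrictTotalDegree ..).mpr le_rfl
  rw [← hspan] at hf
  exact Submodule.span_mono (Set.range_comp_subset_range _ v) hf

end Families

section AdicMonomial

variable {ι R S : Type*} [Fintype ι] [CommSemiring R] [CommSemiring S]

/-- The monomial of exponent `c` in the `F`-adic expansion, where `F i` plays the role of
`X i ^ d i`. The exponents `c i` are divided by `d i` with remainder, so that the exponent of `X i`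
stays below `d i`; this is meaningful only for `0 < d i`. -/
noncomputable def adicMonomial (d : ι → ℕ) (F : ι → MvPolynomial ι R) (c : ι →₀ ℕ) :
    MvPolynomial ι R :=
  ∏ i, X i ^ (c i % d i) * F i ^ (c i / d i)

theorem map_adicMonomial (φ : R →+* S) (d : ι → ℕ) (F : ι → MvPolynomial ι R) (c : ι →₀ ℕ) :
    map φ (adicMonomial d F c) = adicMonomial d (fun i ↦ map φ (F i)) c := by
  simp [adicMonomial, map_prod]

theorem adicMonomial_X_pow (d : ι → ℕ) (c : ι →₀ ℕ) :
    adicMonomial d (fun i ↦ (X i ^ d i : MvPolynomial ι R)) c = monomial c 1 := by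
  simp only [adicMonomial, ← pow_mul, ← pow_add, Nat.mod_add_div]
  rw [monomial_eq, C_1, one_mul, Finsupp.prod_fintype _ _ fun _ ↦ pow_zero _]

theorem totalDegree_adicMonomial_le [Nontrivial R] {d : ι → ℕ} {F : ι → MvPolynomial ι R}
    (hF : ∀ i, (F i).totalDegree ≤ d i) (c : ι →₀ ℕ) :
    (adicMonomial d F c).totalDegree ≤ c.degree := by
  rw [adicMonomial, Finsupp.degree_eq_sum]
  refine (totalDegree_finsetProd _ _).trans (Finset.sum_le_sum fun i _ ↦ ?_)
  calc (X i ^ (c i % d i) * F i ^ (c i / d i)).totalDegree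
      ≤ (X i ^ (c i % d i) : MvPolynomial ι R).totalDegree + (F i ^ (c i / d i)).totalDegree :=
        totalDegree_mul _ _
    _ ≤ c i % d i + c i / d i * d i :=
        add_le_add (totalDegree_X_pow i _).le
          ((totalDegree_pow _ _).trans (Nat.mul_le_mul_left _ (hF i)))
    _ = c i := Nat.mod_add_div' _ _

theorem mul_adicMonomial {d : ι → ℕ} (F : ι → MvPolynomial ι R) (c : ι →₀ ℕ) {i : ι}
    (hi : 0 < d i) :
    F i * adicMonomial d F c = adicMonomial d F (c + Finsupp.single i (d i)) := by
  classical
  have hne {j : ι} (hj : j ∈ Finset.univ.erase i) : (c + Finsupp.single i (d i)) j = c j := by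
    simp [(Finset.ne_of_mem_erase hj).symm]
  rw [adicMonomial, adicMonomial, ← Finset.mul_prod_erase _ _ (Finset.mem_univ i),
    ← Finset.mul_prod_erase (a := i) _ _ (Finset.mem_univ i)]
  rw [Finset.prod_congr rfl fun j hj ↦ by rw [← hne hj], Finsupp.add_apply, Finsupp.single_eq_same,
    Nat.add_mod_right, Nat.add_div_right _ hi, pow_succ]
  ring

theorem span_range_eq_span_adicMonomial {d : ι → ℕ} (hd : ∀ i, 0 < d i)
    {F : ι → MvPolynomial ι R} (hF : Submodule.span R (Set.range (adicMonomial d F)) = ⊤) :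
    (Ideal.span (Set.range F)).restrictScalars R =
      Submodule.span R (adicMonomial d F '' {c | ∀ i, c i < d i}ᶜ) := by
  apply le_antisymm
  · intro f hf
    obtain ⟨a, rfl⟩ := Ideal.mem_span_range_iff_exists_fun.mp hf
    refine Submodule.sum_mem _ fun i _ ↦ ?_
    have ha : a i ∈ Submodule.span R (Set.range (adicMonomial d F)) := hF ▸ Submodule.mem_top
    generalize a i = q at ha ⊢
    induction ha using Submodule.span_induction with
    | mem _ h =>
      obtain ⟨c, rfl⟩ := h
      rw [mul_comm, mul_adicMonomial F c (hd i)]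
      refine Submodule.subset_span ⟨_, fun h ↦ ?_, rfl⟩
      simpa using h i
    | zero => rw [zero_mul]; exact zero_mem _
    | add _ _ _ _ hx hy => rw [add_mul]; exact add_mem hx hy
    | smul r _ _ hx => rw [smul_mul_assoc]; exact Submodule.smul_mem _ r hx
  · rw [Submodule.span_le]
    rintro _ ⟨c, hc, rfl⟩
    obtain ⟨i, hi⟩ : ∃ i, d i ≤ c i := by simpa using hc
    have hc' : c - Finsupp.single i (d i) + Finsupp.single i (d i) = c :=
      tsub_add_cancel_of_le (by simpa using hi)
    rw [← hc', ← mul_adicMonomial F _ (hd i)]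
    exact Ideal.mul_mem_right _ _ (Ideal.subset_span ⟨i, rfl⟩)

theorem nonempty_quotient_span_range_linearEquiv {L : Type*} [Field L] {d : ι → ℕ}
    (hd : ∀ i, 0 < d i) {F : ι → MvPolynomial ι L} (hF : ∀ i, (F i).totalDegree ≤ d i)
    (hli : LinearIndependent L (adicMonomial d F)) :
    Nonempty ((MvPolynomial ι L ⧸ Ideal.span (Set.range F)) ≃ₗ[L] ((∀ i, Fin (d i)) →₀ L)) := by
  have hspan := span_range_eq_top_of_totalDegree_le hli (totalDegree_adicMonomial_le hF)
  let box : Set (ι →₀ ℕ) := {c | ∀ i, c i < d i}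
  have hcompl : IsCompl ((Ideal.span (Set.range F)).restrictScalars L)
      (Submodule.span L (Set.range (adicMonomial d F ∘ ((↑) : box → ι →₀ ℕ)))) := by
    rw [span_range_eq_span_adicMonomial hd hspan, Set.range_comp, Subtype.range_coe]
    exact hli.isCompl_span_image hspan isCompl_compl.symm
  let boxEquiv : box ≃ ∀ i, Fin (d i) :=
    (Finsupp.equivFunOnFinite.subtypeEquiv fun _ ↦ Iff.rfl).trans <|
      Equiv.subtypePiEquivPi.trans (Equiv.piCongrRight fun _ ↦ Fin.equivSubtype.symm)
  exact ⟨(Submodule.Quotient.restrictScalarsEquiv L _).symm.trans <|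
    (Submodule.quotientEquivOfIsCompl _ _ hcompl).trans <|
      (hli.comp _ Subtype.val_injective).linearCombinationEquiv.symm.trans <|
        Finsupp.domLCongr boxEquiv⟩

theorem finite_quotient_span_range {L : Type*} [Field L] {d : ι → ℕ}
    (hd : ∀ i, 0 < d i) {F : ι → MvPolynomial ι L} (hF : ∀ i, (F i).totalDegree ≤ d i)
    (hli : LinearIndependent L (adicMonomial d F)) :
    Module.Finite L (MvPolynomial ι L ⧸ Ideal.span (Set.range F)) := by
  obtain ⟨e⟩ := nonempty_quotient_span_range_linearEquiv hd hF hli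
  exact .equiv e.symm

theorem finrank_quotient_span_range {L : Type*} [Field L] {d : ι → ℕ}
    (hd : ∀ i, 0 < d i) {F : ι → MvPolynomial ι L} (hF : ∀ i, (F i).totalDegree ≤ d i)
    (hli : LinearIndependent L (adicMonomial d F)) :
    Module.finrank L (MvPolynomial ι L ⧸ Ideal.span (Set.range F)) = ∏ i, d i := by
  classical
  obtain ⟨e⟩ := nonempty_quotient_span_range_linearEquiv hd hF hli
  simp [e.finrank_eq]

theorem exists_field_aeval_eq_zero_of_linearIndependent_adicMonomial {ι : Type u} {L : Type v}
    [Fintype ι] [Field L] {p : ℕ} (hp : p.Prime) {d : ι → ℕ} (hd : ∀ i, ¬ p ∣ d i)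
    {F : ι → MvPolynomial ι L} (hF : ∀ i, (F i).totalDegree ≤ d i)
    (hli : LinearIndependent L (adicMonomial d F)) :
    ∃ (E : Type (max u v)) (_ : Field E) (_ : Algebra L E), FiniteDimensional L E ∧
      ¬ p ∣ Module.finrank L E ∧ ∃ x : ι → E, ∀ i, aeval x (F i) = 0 := by
  have hd_pos (i : ι) : 0 < d i := Nat.pos_of_ne_zero fun h ↦ hd i (h ▸ dvd_zero p)
  let A := MvPolynomial ι L ⧸ Ideal.span (Set.range F)
  have : Module.Finite L A := finite_quotient_span_range hd_pos hF hli
  have hA : ¬ p ∣ Module.finrank L A := by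
    rw [finrank_quotient_span_range hd_pos hF hli, hp.prime.dvd_finsetProd_iff]
    simpa using hd
  obtain ⟨I, hI, hpI⟩ := exists_isMaximal_not_dvd_finrank L hA
  let π : MvPolynomial ι L →ₐ[L] A ⧸ I := (Ideal.Quotient.mkₐ L I).comp (Ideal.Quotient.mkₐ L _)
  have hπ (i : ι) : π (F i) = 0 := by
    have hF₀ : Ideal.Quotient.mk (Ideal.span (Set.range F)) (F i) = 0 :=
      Ideal.Quotient.eq_zero_iff_mem.mpr (Ideal.subset_span ⟨i, rfl⟩)
    exact (congrArg (Ideal.Quotient.mk I) hF₀).trans (map_zero _)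
  refine ⟨A ⧸ I, Ideal.Quotient.field I, inferInstance, inferInstance, hpI, π ∘ X, fun i ↦ ?_⟩
  rw [← hπ i, ← aeval_unique π]

end AdicMonomial

section Dehomogenize

variable {ι σ τ R S : Type*} [CommSemiring R] [CommSemiring S]

theorem totalDegree_bind₁_le (f : MvPolynomial σ R) {y : σ → MvPolynomial τ R}
    (hy : ∀ j, (y j).totalDegree ≤ 1) : (bind₁ y f).totalDegree ≤ f.totalDegree := by
  rw [bind₁, aeval_def, eval₂_eq]
  refine totalDegree_finsetSum_le fun c hc ↦ ?_
  rw [algebraMap_eq, ← smul_eq_C_mul]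
  calc (coeff c f • ∏ i ∈ c.support, y i ^ c i).totalDegree
      ≤ ∑ i ∈ c.support, (y i ^ c i).totalDegree :=
        (totalDegree_smul_le _ _).trans (totalDegree_finsetProd _ _)
    _ ≤ ∑ i ∈ c.support, c i := Finset.sum_le_sum fun i _ ↦
        (totalDegree_pow _ _).trans (mul_le_of_le_one_right' (hy i))
    _ ≤ f.totalDegree := le_totalDegree hc

/-- The dehomogenization of a polynomial with respect to the variable `X none`: the homogeneous
coordinates of projective space are indexed by `Option ι` and the chart `X none = 1` by `ι`. -/
noncomputable def dehomogenize : MvPolynomial (Option ι) R →ₐ[R] MvPolynomial ι R :=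
  bind₁ fun o ↦ o.elim 1 X

theorem map_dehomogenize (φ : R →+* S) (f : MvPolynomial (Option ι) R) :
    map φ (dehomogenize f) = dehomogenize (map φ f) := by
  rw [dehomogenize, map_bind₁, dehomogenize]
  congr 2
  funext o
  cases o <;> simp

theorem aeval_dehomogenize [Algebra R S] (x : ι → S) (f : MvPolynomial (Option ι) R) :
    aeval x (dehomogenize f) = aeval (fun o : Option ι ↦ o.elim 1 x) f := by
  rw [dehomogenize, aeval_bind₁]
  congr 2
  funext o
  cases o <;> simp

theorem totalDegree_dehomogenize_le [Nontrivial R] (f : MvPolynomial (Option ι) R) :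
    (dehomogenize f).totalDegree ≤ f.totalDegree := by
  refine totalDegree_bind₁_le f fun o ↦ ?_
  cases o <;> simp

end Dehomogenize

section Specialization

variable {p : ℕ}

theorem exists_field_aeval_eq_zero_of_map_eq_X_pow {ι : Type u} {L : Type v} {R k : Type*}
    [Finite ι] [Field L] [CommRing R] [CommRing k] [Nontrivial k] [Algebra R L]
    [FaithfulSMul R L] (hp : p.Prime) {d : ι → ℕ} (hd : ∀ i, ¬ p ∣ d i)
    {H : ι → MvPolynomial (Option ι) R} (hH : ∀ i, (H i).IsHomogeneous (d i)) (φ : R →+* k)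
    (hφ : ∀ i, map φ (H i) = X (some i) ^ d i) :
    ∃ (E : Type (max u v)) (_ : Field E) (_ : Algebra L E), FiniteDimensional L E ∧
      ¬ p ∣ Module.finrank L E ∧
      ∃ z : Option ι → E, z ≠ 0 ∧ ∀ i, aeval z (map (algebraMap R L) (H i)) = 0 := by
  have := Fintype.ofFinite ι
  let F (i : ι) := dehomogenize (map (algebraMap R L) (H i))
  have hF (i : ι) : (F i).totalDegree ≤ d i :=
    (totalDegree_dehomogenize_le _).trans ((hH i).map _).totalDegree_le
  have hli : LinearIndependent L (adicMonomial d F) := by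
    have hφF (c : ι →₀ ℕ) :
        map φ (adicMonomial d (fun i ↦ dehomogenize (H i)) c) = monomial c 1 := by
      simp only [map_adicMonomial, map_dehomogenize, hφ, ← adicMonomial_X_pow d c]
      simp [dehomogenize]
    simpa only [map_adicMonomial, map_dehomogenize] using
      linearIndependent_map_of_map_eq_monomial φ (FaithfulSMul.algebraMap_injective R L) hφF
  obtain ⟨E, _, _, hfin, hpE, x, hx⟩ :=
    exists_field_aeval_eq_zero_of_linearIndependent_adicMonomial hp hd hF hli
  exact ⟨E, _, _, hfin, hpE, fun o ↦ o.elim 1 x, fun h ↦ one_ne_zero (congrFun h none),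
    fun i ↦ (aeval_dehomogenize x _).symm.trans (hx i)⟩

theorem exists_ne_zero_aeval_eq_zero_of_not_dvd_finrank {R K L E : Type*} [CommRing R] [IsDomain R]
    [IsPrincipalIdealRing R] [Field L] [Algebra R L] [IsFractionRing R L] [Field E] [Algebra L E]
    [FiniteDimensional L E] [Algebra.IsSeparable L E] [Field K] [Algebra R K]
    (hK : IsPField p K) (hE : ¬ p ∣ Module.finrank L E) {σ κ : Type*} [Finite σ] {d : κ → ℕ}
    {H : κ → MvPolynomial σ R} (hH : ∀ i, (H i).IsHomogeneous (d i)) {z : σ → E} (hz : z ≠ 0)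
    (hHz : ∀ i, aeval z (map (algebraMap R L) (H i)) = 0) :
    ∃ x : σ → K, x ≠ 0 ∧ ∀ i, aeval x (H i) = 0 := by
  let := Algebra.compHom E (algebraMap R L)
  have : IsScalarTower R L E := .of_algebraMap_eq fun _ ↦ rfl
  let S := integralClosure R E
  have : IsDedekindDomain S := integralClosure.isDedekindDomain R L E
  have : IsFractionRing S E := IsIntegralClosure.isFractionRing_of_finite_extension R L E S
  obtain ⟨φ⟩ : Nonempty (S →ₐ[R] K) := nonempty_algHom_integralClosure (L := L) hK hE
  obtain ⟨x, hx, hfx⟩ := exists_ne_zero_eval₂_eq_zero_of_isDedekindDomain φ.toRingHom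
    (f := fun i ↦ map (algebraMap R S) (H i)) (fun i ↦ (hH i).map _) hz
    (fun i ↦ by rw [aeval_map_algebraMap, ← aeval_map_algebraMap L z, hHz i])
  refine ⟨x, hx, fun i ↦ ?_⟩
  have hφ : φ.toRingHom.comp (algebraMap R S) = algebraMap R K := φ.comp_algebraMap
  rw [← hfx i, eval₂_map, hφ, aeval_def]

end Specialization

section Systems

variable {p : ℕ} {K ι σ : Type*} [Field K] [CharZero K]

theorem exists_ne_zero_eval_eq_zero_option [Finite ι] (hp : p.Prime)
    (hK : IsPField p K) {d : ι → ℕ} (hd : ∀ i, ¬ p ∣ d i) {f : ι → MvPolynomial (Option ι) K}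
    (hf : ∀ i, (f i).IsHomogeneous (d i)) :
    ∃ x : Option ι → K, x ≠ 0 ∧ ∀ i, eval x (f i) = 0 := by
  let T : Polynomial K := Polynomial.X
  let H (i : ι) : MvPolynomial (Option ι) (Polynomial K) :=
    C T * X (some i) ^ d i + C (1 - T) * map Polynomial.C (f i)
  have hH (i : ι) : (H i).IsHomogeneous (d i) :=
    ((isHomogeneous_X_pow _ _).C_mul _).add (((hf i).map _).C_mul _)
  let φ (a : K) : Polynomial K →+* K := Polynomial.evalRingHom a
  have hφ (a : K) (i : ι) : map (φ a) (H i) = C a * X (some i) ^ d i + C (1 - a) * f i := by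
    have hφC : (φ a).comp Polynomial.C = RingHom.id K := by ext; simp [φ]
    simp [H, map_map, hφC, MvPolynomial.map_id, φ, T]
  let L := FractionRing (Polynomial K)
  have : CharZero L := charZero_of_injective_algebraMap (IsFractionRing.injective (Polynomial K) L)
  obtain ⟨E, _, _, _, hE, z, hz, hHz⟩ := exists_field_aeval_eq_zero_of_map_eq_X_pow (L := L) hp hd
    hH (φ 1) fun i ↦ by simp [hφ]
  let := (φ 0).toAlgebra
  obtain ⟨x, hx, hHx⟩ := exists_ne_zero_aeval_eq_zero_of_not_dvd_finrank hK hE hH hz hHz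
  refine ⟨x, hx, fun i ↦ ?_⟩
  have hφ₀ : map (φ 0) (H i) = f i := by simp [hφ]
  rw [← hφ₀, eval_map]
  exact hHx i

theorem stmt0_general [Fintype ι] [Fintype σ] (hp : p.Prime) (hK : IsPField p K)
    (hcard : Fintype.card ι < Fintype.card σ) {d : ι → ℕ} (hd : ∀ i, ¬ p ∣ d i)
    {f : ι → MvPolynomial σ K} (hf : ∀ i, (f i).IsHomogeneous (d i)) :
    ∃ x : σ → K, x ≠ 0 ∧ ∀ i, eval x (f i) = 0 := by
  obtain ⟨e⟩ : Nonempty (Option ι ↪ σ) :=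
    Function.Embedding.nonempty_of_card_le (by rwa [Fintype.card_option])
  let y : σ → MvPolynomial (Option ι) K := Function.extend e X 0
  have hy (j : σ) : (y j).IsHomogeneous 1 := by
    by_cases hj : ∃ o, e o = j
    · obtain ⟨o, rfl⟩ := hj
      simpa only [y, e.injective.extend_apply] using isHomogeneous_X K o
    · simpa only [y, Function.extend_apply' _ _ _ hj, Pi.zero_apply] using
        isHomogeneous_zero (Option ι) K 1
  obtain ⟨x, hx, hfx⟩ := exists_ne_zero_eval_eq_zero_option hp hK hd (f := fun i ↦ bind₁ y (f i))
    fun i ↦ one_mul (d i) ▸ (hf i).aeval y hy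
  obtain ⟨o, ho⟩ := Function.ne_iff.mp hx
  refine ⟨fun j ↦ eval x (y j), Function.ne_iff.mpr ⟨e o, ?_⟩, fun i ↦ ?_⟩
  · simpa [y, e.injective.extend_apply] using ho
  · rw [← hfx i]
    exact (eval₂Hom_bind₁ _ _ _ _).symm

end Systems

/-- Any system of `r` odd-degree homogeneous forms over `ℝ` in `n > r` variables has a
nonzero real solution. -/
theorem stmt0 (n r : ℕ) (hnr : r < n) (d : Fin r → ℕ) (hd : ∀ i, Odd (d i))
    (f : Fin r → MvPolynomial (Fin n) ℝ) (hf : ∀ i, (f i).IsHomogeneous (d i)) :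
    ∃ x : Fin n → ℝ, x ≠ 0 ∧ ∀ i, MvPolynomial.eval x (f i) = 0 :=
  stmt0_general Nat.prime_two isPField_two_real (by simpa using hnr)
    (fun i ↦ (hd i).not_two_dvd_nat) hf
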